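/- Assume N ≥ 2, 0 < α < N and p > (N+α)/N, and let {u_n} ⊂ E_λ be a (PS)_c sequence for J_λ. Then: (i) {u_n} is bounded in E_λ, i.e. sup_n ‖u_n‖_{E_λ} < ∞; (ii) lim_{n→∞} ‖u_n‖²_{E_λ} = 2pc/(p−1); and (iii) there exists c₀ > 0, depending only on N, α, p and the growth and kernel constants (in particular not on λ), such that either c = 0 or c ≥ c₀. -/

import Mathlib

open scoped BigOperators ENNReal
open Filter

noncomputable section

namespace Choquard

variable {G : Type*}

/-- The word metric on a group with generating set `S`. -/
def wordDist [Group G] (S : Finset G) (x y : G) : ℕ :=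
  sInf {k : ℕ | ∃ l : List G, (∀ g ∈ l, g ∈ S) ∧ l.length = k ∧ x⁻¹ * y = l.prod}

/-- The closed ball of radius `r` about `c` in the word metric. -/
def ball [Group G] (S : Finset G) (c : G) (r : ℝ) : Set G :=
  {x | (wordDist S x c : ℝ) ≤ r}

/-- Polynomial growth of homogeneous dimension `N`. -/
def PolyGrowth [Group G] (S : Finset G) (N : ℕ) : Prop :=
  ∃ C₁ C₂ : ℝ, 0 < C₁ ∧ 0 < C₂ ∧ ∀ r : ℝ, 1 ≤ r →
    C₁ * r ^ N ≤ ((ball S (1 : G) r).ncard : ℝ) ∧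
    ((ball S (1 : G) r).ncard : ℝ) ≤ C₂ * r ^ N

/-- Riesz-type asymptotics for the kernel `R`. -/
def RieszKernel [Group G] (S : Finset G) (N : ℕ) (α : ℝ) (R : G → G → ℝ) : Prop :=
  (∀ x y, 0 < R x y) ∧
  ∃ c₁ c₂ : ℝ, 0 < c₁ ∧ 0 < c₂ ∧ ∀ x y : G, x ≠ y →
    c₁ * (wordDist S x y : ℝ) ^ (α - (N : ℝ)) ≤ R x y ∧
    R x y ≤ c₂ * (wordDist S x y : ℝ) ^ (α - (N : ℝ))

/-- Convolution `(R ∗ f)(x) = Σ_{y ≠ x} R x y f y`. -/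
def conv [DecidableEq G] (R : G → G → ℝ) (f : G → ℝ) (x : G) : ℝ :=
  ∑' y, if y = x then 0 else R x y * f y

/-- The convolution as an extended-nonnegative-real valued sum. -/
def convE [DecidableEq G] (R : G → G → ℝ) (f : G → ℝ) (x : G) : ℝ≥0∞ :=
  ∑' y, if y = x then 0 else ENNReal.ofReal (R x y * f y)

/-- Membership in `ℓ^q(G)`. -/
def Memlp (q : ℝ) (u : G → ℝ) : Prop := Summable fun x => |u x| ^ q

/-- The `ℓ^q` norm. -/
def lpNorm (q : ℝ) (u : G → ℝ) : ℝ := (∑' x, |u x| ^ q) ^ (1 / q)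

/-- The `ℓ^∞` norm. -/
def supNorm (u : G → ℝ) : ℝ := ⨆ x, |u x|

/-- The graph Laplacian `Δu(x) = Σ_{s ∈ S} (u(xs) - u(x))`. -/
def lap [Group G] (S : Finset G) (u : G → ℝ) (x : G) : ℝ :=
  ∑ s ∈ S, (u (x * s) - u x)

/-- The gradient form `∇u∇v(x) = (1/2) Σ_{s ∈ S} (u(xs)-u(x))(v(xs)-v(x))`. -/
def grad [Group G] (S : Finset G) (u v : G → ℝ) (x : G) : ℝ :=
  (1 / 2) * ∑ s ∈ S, (u (x * s) - u x) * (v (x * s) - v x)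

/-- The density `|Δu|² + |∇u|² + (1 + λa)u²`. -/
def eDensity [Group G] (S : Finset G) (a : G → ℝ) (lam : ℝ) (u : G → ℝ) (x : G) : ℝ :=
  (lap S u x) ^ 2 + grad S u u x + (1 + lam * a x) * (u x) ^ 2

/-- Membership in the space `E_λ`. -/
def MemE [Group G] (S : Finset G) (a : G → ℝ) (lam : ℝ) (u : G → ℝ) : Prop :=
  Summable (eDensity S a lam u)

/-- `‖u‖²_{E_λ}`. -/
def normEsq [Group G] (S : Finset G) (a : G → ℝ) (lam : ℝ) (u : G → ℝ) : ℝ :=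
  ∑' x, eDensity S a lam u x

/-- `‖u‖_{E_λ}`. -/
def normE [Group G] (S : Finset G) (a : G → ℝ) (lam : ℝ) (u : G → ℝ) : ℝ :=
  Real.sqrt (normEsq S a lam u)

/-- The inner product `⟨u, v⟩_{E_λ}`. -/
def innerE [Group G] (S : Finset G) (a : G → ℝ) (lam : ℝ) (u v : G → ℝ) : ℝ :=
  ∑' x, (lap S u x * lap S v x + grad S u v x + (1 + lam * a x) * (u x * v x))

/-- The nonlocal term `Σ_G (R_α ∗ |u|^p)|u|^p`. -/
def Dterm [DecidableEq G] (R : G → G → ℝ) (p : ℝ) (u : G → ℝ) : ℝ :=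
  ∑' x, conv R (fun y => |u y| ^ p) x * |u x| ^ p

/-- The nonlocal pairing `Σ_G (R_α ∗ |u|^p)|u|^{p-2} u v`. -/
def Kterm [DecidableEq G] (R : G → G → ℝ) (p : ℝ) (u v : G → ℝ) : ℝ :=
  ∑' x, conv R (fun y => |u y| ^ p) x * (|u x| ^ (p - 2) * u x * v x)

/-- The energy functional `J_λ`. -/
def Jfun [Group G] [DecidableEq G] (S : Finset G) (a : G → ℝ) (lam : ℝ)
    (R : G → G → ℝ) (p : ℝ) (u : G → ℝ) : ℝ :=
  (1 / 2) * normEsq S a lam u - (1 / (2 * p)) * Dterm R p u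

/-- The derivative pairing `(J'_λ(u), v)`. -/
def Jd [Group G] [DecidableEq G] (S : Finset G) (a : G → ℝ) (lam : ℝ)
    (R : G → G → ℝ) (p : ℝ) (u v : G → ℝ) : ℝ :=
  innerE S a lam u v - Kterm R p u v

/-- The Nehari manifold `N_λ`. -/
def nehari [Group G] [DecidableEq G] (S : Finset G) (a : G → ℝ) (lam : ℝ)
    (R : G → G → ℝ) (p : ℝ) : Set (G → ℝ) :=
  {u | MemE S a lam u ∧ u ≠ 0 ∧ Jd S a lam R p u u = 0}

/-- `m_λ = inf_{N_λ} J_λ`. -/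
def mlam [Group G] [DecidableEq G] (S : Finset G) (a : G → ℝ) (lam : ℝ)
    (R : G → G → ℝ) (p : ℝ) : ℝ :=
  sInf (Jfun S a lam R p '' nehari S a lam R p)

/-- The norm of `J'_λ(u)` in the dual space `E_λ*`. -/
def dualNorm [Group G] [DecidableEq G] (S : Finset G) (a : G → ℝ) (lam : ℝ)
    (R : G → G → ℝ) (p : ℝ) (u : G → ℝ) : ℝ :=
  sSup {t : ℝ | ∃ v, MemE S a lam v ∧ normEsq S a lam v ≤ 1 ∧ t = |Jd S a lam R p u v|}

/-- `(PS)_c` sequence for `J_λ`. -/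
def PSseq [Group G] [DecidableEq G] (S : Finset G) (a : G → ℝ) (lam : ℝ)
    (R : G → G → ℝ) (p : ℝ) (c : ℝ) (U : ℕ → G → ℝ) : Prop :=
  (∀ n, MemE S a lam (U n)) ∧
  Tendsto (fun n => Jfun S a lam R p (U n)) atTop (nhds c) ∧
  Tendsto (fun n => dualNorm S a lam R p (U n)) atTop (nhds 0)

/-- The Cayley graph of `(G, S)`. -/
def cayley [Group G] (S : Finset G) : SimpleGraph G :=
  SimpleGraph.fromRel (fun x y => x⁻¹ * y ∈ S)

/-- Condition (A₁): the potential well `Ω = {a = 0}` is nonempty, finite and connected. -/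
def CondA1 [Group G] (S : Finset G) (a : G → ℝ) : Prop :=
  {x | a x = 0}.Nonempty ∧ {x | a x = 0}.Finite ∧
  ((cayley S).induce {x | a x = 0}).Connected

/-- Condition (A₂): some sublevel set `{a ≤ M}` is finite and nonempty. -/
def CondA2 (a : G → ℝ) : Prop :=
  ∃ M : ℝ, 0 < M ∧ {x | a x ≤ M}.Finite ∧ {x | a x ≤ M}.Nonempty

/-- The density `|Δu|² + |∇u|² + u²` of the `W^{2,2}` norm. -/
def wDensity [Group G] (S : Finset G) (u : G → ℝ) (x : G) : ℝ :=
  (lap S u x) ^ 2 + grad S u u x + (u x) ^ 2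

/-- Membership in `W^{2,2}(G)`. -/
def MemW [Group G] (S : Finset G) (u : G → ℝ) : Prop := Summable (wDensity S u)

/-- `‖u‖²_{W^{2,2}}`. -/
def normWsq [Group G] (S : Finset G) (u : G → ℝ) : ℝ := ∑' x, wDensity S u x

/-- Membership in `E(Ω)`: vanishing outside `Ω`. -/
def MemEOm (Ω : Set G) (u : G → ℝ) : Prop := ∀ x ∉ Ω, u x = 0

/-- `‖u‖²_{E(Ω)}`. -/
def normOmSq [Group G] (S : Finset G) (Ω : Set G) (u : G → ℝ) : ℝ :=
  (∑' x, ((lap S u x) ^ 2 + grad S u u x)) + ∑' x : Ω, (u (x : G)) ^ 2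

/-- The nonlocal term over `Ω`. -/
def DtermOm [DecidableEq G] (Ω : Set G) (R : G → G → ℝ) (p : ℝ) (u : G → ℝ) : ℝ :=
  ∑' x : Ω, conv R (fun y => |u y| ^ p) (x : G) * |u (x : G)| ^ p

/-- The limiting energy functional `J_Ω`. -/
def JOm [Group G] [DecidableEq G] (S : Finset G) (Ω : Set G) (R : G → G → ℝ) (p : ℝ)
    (u : G → ℝ) : ℝ :=
  (1 / 2) * normOmSq S Ω u - (1 / (2 * p)) * DtermOm Ω R p u

/-- The derivative pairing `(J'_Ω(u), v)`. -/
def JdOm [Group G] [DecidableEq G] (S : Finset G) (Ω : Set G) (R : G → G → ℝ) (p : ℝ)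
    (u v : G → ℝ) : ℝ :=
  (∑' x, (lap S u x * lap S v x + grad S u v x)) + (∑' x : Ω, u (x : G) * v (x : G))
    - ∑' x : Ω, conv R (fun y => |u y| ^ p) (x : G) * (|u (x : G)| ^ (p - 2) * u (x : G) * v (x : G))

/-- The Nehari manifold `N_Ω`. -/
def nehariOm [Group G] [DecidableEq G] (S : Finset G) (Ω : Set G) (R : G → G → ℝ)
    (p : ℝ) : Set (G → ℝ) :=
  {u | MemEOm Ω u ∧ u ≠ 0 ∧ JdOm S Ω R p u u = 0}

/-- `m_Ω = inf_{N_Ω} J_Ω`. -/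
def mOm [Group G] [DecidableEq G] (S : Finset G) (Ω : Set G) (R : G → G → ℝ) (p : ℝ) : ℝ :=
  sInf (JOm S Ω R p '' nehariOm S Ω R p)

/-!
The nonlocal term is controlled by the energy norm through a discrete Hardy–Littlewood–Sobolev
inequality `Σ_{x ≠ y} |R(x, y)| |u(x)|^p |u(y)|^p ≤ M ‖u‖₂^{2p}`. If `p ≥ 2`, it is enough that `R`
is bounded, since `ℓ²` embeds into `ℓ^p`. If `p < 2`, Hölder's and Young's inequalities reduce it to
the kernel being dominated by a function of `y⁻¹x` in `ℓ^{1/(2-p)}`, which holds because a ball of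
radius `r` has `O(r^N)` elements and `(N - α)/(2 - p) > N`.

Testing `J'(u)` against `u` itself gives `(p - 1)‖u‖² = 2p J(u) - (J'(u), u)`, in which the last
term is at most `‖J'(u)‖ ‖u‖`. Along a Palais–Smale sequence this bounds the norms, so
`(J'(uₙ), uₙ) → 0` and `‖uₙ‖² → X = 2pc/(p - 1)`. Finally `‖uₙ‖² ≤ (J'(uₙ), uₙ) + M ‖uₙ‖^{2p}`
becomes `X ≤ M X^p` in the limit, so that `X` is either zero or at least `M^{-1/(p-1)}`.
-/

section WordMetric

lemma submonoidClosure_eq_subgroupClosure [Group G] {s : Set G} (hs : ∀ g ∈ s, g⁻¹ ∈ s) :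
    Submonoid.closure s = (Subgroup.closure s).toSubmonoid := by
  have inv_subset : s⁻¹ ⊆ s := fun g hg => inv_inv g ▸ hs _ hg
  rw [Subgroup.closure_toSubmonoid, Set.union_eq_self_of_subset_right inv_subset]

variable [Group G] {S : Finset G}

lemma wordDist_eq_wordDist_one (x y : G) : wordDist S x y = wordDist S (y⁻¹ * x) 1 := by
  simp only [wordDist, mul_inv_rev, inv_inv, mul_one]

lemma exists_list_length_eq_wordDist (hS : Submonoid.closure (S : Set G) = ⊤) (x y : G) :
    ∃ l : List G, (∀ g ∈ l, g ∈ S) ∧ l.length = wordDist S x y ∧ x⁻¹ * y = l.prod := by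
  obtain ⟨l, hl, hprod⟩ := Submonoid.exists_list_of_mem_closure
    (hS ▸ Submonoid.mem_top (x⁻¹ * y) : x⁻¹ * y ∈ Submonoid.closure (S : Set G))
  have lengths_nonempty : {k : ℕ | ∃ l : List G, (∀ g ∈ l, g ∈ S) ∧ l.length = k ∧
      x⁻¹ * y = l.prod}.Nonempty := ⟨l.length, l, hl, rfl, hprod.symm⟩
  exact Nat.sInf_mem lengths_nonempty

lemma finite_ball (hS : Submonoid.closure (S : Set G) = ⊤) (c : G) (r : ℝ) :
    (ball S c r).Finite := by
  refine ((List.finite_length_le S ⌊r⌋₊).image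
    fun l => c * (l.map Subtype.val).prod⁻¹).subset fun x (hx : (wordDist S x c : ℝ) ≤ r) => ?_
  obtain ⟨l, hl, hlen, hprod⟩ := exists_list_length_eq_wordDist hS x c
  lift l to List S using hl
  refine ⟨l, Nat.le_floor ?_, ?_⟩
  · rwa [← hlen, List.length_map] at hx
  · simp only [← hprod, mul_inv_rev, inv_inv, mul_inv_cancel_left]

lemma encard_ball_le (hS : Submonoid.closure (S : Set G) = ⊤) {N : ℕ} {C : ℝ}
    (hgrowth : ∀ r : ℝ, 1 ≤ r → ((ball S (1 : G) r).ncard : ℝ) ≤ C * r ^ N) {r : ℝ} (hr : 1 ≤ r) :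
    ((ball S (1 : G) r).encard : ℝ≥0∞) ≤ ENNReal.ofReal (C * r ^ N) := by
  rw [← (finite_ball hS 1 r).cast_ncard_eq, ENat.toENNReal_coe, ← ENNReal.ofReal_natCast]
  exact ENNReal.ofReal_le_ofReal (hgrowth r hr)

end WordMetric

section RieszSum

lemma ofReal_natCast_rpow_neg_le_tsum {β : ℝ} (hβ : 0 < β) (n : ℕ) :
    ENNReal.ofReal ((n : ℝ) ^ (-β)) ≤
      ∑' k : ℕ, if (n : ℝ) ≤ 2 ^ (k + 1) then ENNReal.ofReal ((2 : ℝ) ^ (-β)) ^ k else 0 := by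
  rcases eq_or_ne n 0 with rfl | hn
  · simp only [Nat.cast_zero, Real.zero_rpow (neg_ne_zero.2 hβ.ne'), ENNReal.ofReal_zero, zero_le]
  have hlog_le : (2 : ℝ) ^ Nat.log 2 n ≤ n := mod_cast Nat.pow_log_le_self 2 hn
  have hle_log : (n : ℝ) ≤ 2 ^ (Nat.log 2 n + 1) :=
    mod_cast (Nat.lt_pow_succ_log_self one_lt_two n).le
  refine le_trans ?_ (ENNReal.le_tsum (Nat.log 2 n))
  rw [if_pos hle_log, ← ENNReal.ofReal_pow (by positivity), Real.rpow_pow_comm zero_le_two]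
  exact ENNReal.ofReal_le_ofReal
    (Real.rpow_le_rpow_of_nonpos (by positivity) hlog_le (neg_nonpos.2 hβ.le))

lemma tsum_ofReal_wordDist_rpow_neg_le [Group G] {S : Finset G}
    (hS : Submonoid.closure (S : Set G) = ⊤) {N : ℕ} {C : ℝ}
    (hgrowth : ∀ r : ℝ, 1 ≤ r → ((ball S (1 : G) r).ncard : ℝ) ≤ C * r ^ N)
    {β : ℝ} (hβ : 0 < β) :
    ∑' g : G, ENNReal.ofReal ((wordDist S g 1 : ℝ) ^ (-β)) ≤
      ENNReal.ofReal (C * 2 ^ N) * (1 - ENNReal.ofReal ((2 : ℝ) ^ (N - β)))⁻¹ := by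
  set b : ℝ≥0∞ := ENNReal.ofReal ((2 : ℝ) ^ (-β)) with hb
  have ratio_eq : ENNReal.ofReal ((2 : ℝ) ^ (N - β)) = ENNReal.ofReal (2 ^ N) * b := by
    rw [hb, ← ENNReal.ofReal_mul (by positivity), sub_eq_add_neg, Real.rpow_add two_pos,
      Real.rpow_natCast]
  have layer_le (k : ℕ) :
      ∑' g : G, (if (wordDist S g 1 : ℝ) ≤ 2 ^ (k + 1) then b ^ k else 0) ≤
        ENNReal.ofReal (C * 2 ^ N) * ENNReal.ofReal ((2 : ℝ) ^ (N - β)) ^ k := by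
    calc ∑' g : G, (if (wordDist S g 1 : ℝ) ≤ 2 ^ (k + 1) then b ^ k else 0)
        = ∑' g : G, (ball S (1 : G) (2 ^ (k + 1))).indicator (fun _ => b ^ k) g := by
          simp only [Set.indicator_apply, ball, Set.mem_ofPred_eq]
      _ = (ball S (1 : G) (2 ^ (k + 1))).encard * b ^ k := by
          rw [← tsum_subtype, ENNReal.tsum_set_const]
      _ ≤ ENNReal.ofReal (C * (2 ^ (k + 1)) ^ N) * b ^ k := by
          gcongr
          exact encard_ball_le hS hgrowth (one_le_pow₀ one_le_two)
      _ = ENNReal.ofReal (C * 2 ^ N) * ENNReal.ofReal ((2 : ℝ) ^ (N - β)) ^ k := by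
          have hpow : (0 : ℝ) ≤ 2 ^ N := by positivity
          rw [ratio_eq, mul_pow, ← mul_assoc, ← ENNReal.ofReal_pow hpow,
            ← ENNReal.ofReal_mul' (pow_nonneg hpow k)]
          congr 2
          ring
  calc ∑' g : G, ENNReal.ofReal ((wordDist S g 1 : ℝ) ^ (-β))
      ≤ ∑' (g : G) (k : ℕ), (if (wordDist S g 1 : ℝ) ≤ 2 ^ (k + 1) then b ^ k else 0) :=
        ENNReal.tsum_le_tsum fun g => ofReal_natCast_rpow_neg_le_tsum hβ _
    _ = ∑' (k : ℕ) (g : G), (if (wordDist S g 1 : ℝ) ≤ 2 ^ (k + 1) then b ^ k else 0) :=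
        ENNReal.tsum_comm
    _ ≤ ∑' k : ℕ, ENNReal.ofReal (C * 2 ^ N) * ENNReal.ofReal ((2 : ℝ) ^ (N - β)) ^ k :=
        ENNReal.tsum_le_tsum layer_le
    _ = ENNReal.ofReal (C * 2 ^ N) * (1 - ENNReal.ofReal ((2 : ℝ) ^ (N - β)))⁻¹ := by
        rw [ENNReal.tsum_mul_left, ENNReal.tsum_geometric]

end RieszSum

section Young

lemma tsum_rpow_mul_rpow_le {ι : Type*} (f g : ι → ℝ≥0∞) {a b : ℝ} (ha : 0 ≤ a) (hb : 0 ≤ b)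
    (hab : a + b = 1) : ∑' i, f i ^ a * g i ^ b ≤ (∑' i, f i) ^ a * (∑' i, g i) ^ b := by
  let : MeasurableSpace ι := ⊤
  simpa only [MeasureTheory.lintegral_count] using
    ENNReal.lintegral_mul_norm_pow_le (μ := MeasureTheory.Measure.count)
      (measurable_from_top (f := f)).aemeasurable (measurable_from_top (f := g)).aemeasurable
      ha hb hab

lemma tsum_tsum_rpow_mul_rpow_le {ι κ : Type*} (f g : ι → κ → ℝ≥0∞) {a b : ℝ} (ha : 0 ≤ a)
    (hb : 0 ≤ b) (hab : a + b = 1) :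
    ∑' i, ∑' j, f i j ^ a * g i j ^ b ≤ (∑' i, ∑' j, f i j) ^ a * (∑' i, ∑' j, g i j) ^ b := by
  simpa only [← ENNReal.tsum_prod] using
    tsum_rpow_mul_rpow_le (fun z : ι × κ => f z.1 z.2) (fun z => g z.1 z.2) ha hb hab

lemma tsum_tsum_mul {ι κ : Type*} (f : ι → ℝ≥0∞) (g : κ → ℝ≥0∞) :
    ∑' i, ∑' j, f i * g j = (∑' i, f i) * ∑' j, g j := by
  simp_rw [ENNReal.tsum_mul_left, ENNReal.tsum_mul_right]

lemma tsum_rpow_le_rpow_tsum_sq {ι : Type*} (w : ι → ℝ≥0∞) {p : ℝ} (hp : 2 ≤ p) :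
    ∑' i, w i ^ p ≤ (∑' i, w i ^ 2) ^ (p / 2) := by
  set T := ∑' i, w i ^ 2
  have rpow_sub_le (i : ι) : w i ^ (p - 2) ≤ T ^ ((p - 2) / 2) := by
    have : (w i ^ 2) ^ ((p - 2) / 2) ≤ T ^ ((p - 2) / 2) :=
      ENNReal.rpow_le_rpow (ENNReal.le_tsum i) (by linarith)
    rwa [← ENNReal.rpow_natCast, ← ENNReal.rpow_mul, Nat.cast_ofNat,
      mul_div_cancel₀ _ two_ne_zero] at this
  calc ∑' i, w i ^ p
      = ∑' i, w i ^ 2 * w i ^ (p - 2) := by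
        refine tsum_congr fun i => ?_
        rw [← ENNReal.rpow_natCast, ← ENNReal.rpow_add_of_nonneg _ _ (by positivity) (by linarith)]
        congr 1
        push_cast
        ring
    _ ≤ ∑' i, w i ^ 2 * T ^ ((p - 2) / 2) := by gcongr with i; exact rpow_sub_le i
    _ = T ^ (1 : ℝ) * T ^ ((p - 2) / 2) := by rw [ENNReal.tsum_mul_right, ENNReal.rpow_one]
    _ = T ^ (p / 2) := by
        rw [← ENNReal.rpow_add_of_nonneg _ _ zero_le_one (by linarith)]
        congr 1
        ring

variable [Group G]

lemma tsum_tsum_conv_mul_sq_left (k w : G → ℝ≥0∞) :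
    ∑' x, ∑' y, k (y⁻¹ * x) * w x ^ 2 = (∑' g, k g) * ∑' x, w x ^ 2 := by
  have tsum_kernel (x : G) : ∑' y, k (y⁻¹ * x) = ∑' g, k g :=
    ((Equiv.inv G).trans (Equiv.mulRight x)).tsum_eq k
  simp_rw [ENNReal.tsum_mul_right, tsum_kernel, ENNReal.tsum_mul_left]

lemma tsum_tsum_conv_mul_sq_right (k w : G → ℝ≥0∞) :
    ∑' x, ∑' y, k (y⁻¹ * x) * w y ^ 2 = (∑' g, k g) * ∑' x, w x ^ 2 := by
  have tsum_kernel (y : G) : ∑' x, k (y⁻¹ * x) = ∑' g, k g := (Equiv.mulLeft y⁻¹).tsum_eq k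
  rw [ENNReal.tsum_comm]
  simp_rw [ENNReal.tsum_mul_right, tsum_kernel, ENNReal.tsum_mul_left]

lemma tsum_tsum_conv_mul_le (k w : G → ℝ≥0∞) :
    ∑' x, ∑' y, k (y⁻¹ * x) * (w x * w y) ≤ (∑' g, k g) * ∑' x, w x ^ 2 := by
  have hhalf : (0 : ℝ) ≤ 1 / 2 := by norm_num
  have sqrt_sq (z : ℝ≥0∞) : (z ^ 2) ^ (1 / 2 : ℝ) = z := by
    rw [← ENNReal.rpow_natCast, ← ENNReal.rpow_mul]
    norm_num
  have sqrt_mul_sqrt (z : ℝ≥0∞) : z ^ (1 / 2 : ℝ) * z ^ (1 / 2 : ℝ) = z := by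
    rw [← ENNReal.rpow_add_of_nonneg _ _ hhalf hhalf]
    norm_num
  calc ∑' x, ∑' y, k (y⁻¹ * x) * (w x * w y)
      = ∑' x, ∑' y, (k (y⁻¹ * x) * w x ^ 2) ^ (1 / 2 : ℝ) *
          (k (y⁻¹ * x) * w y ^ 2) ^ (1 / 2 : ℝ) := by
        refine tsum_congr fun x => tsum_congr fun y => ?_
        rw [ENNReal.mul_rpow_of_nonneg _ _ hhalf, ENNReal.mul_rpow_of_nonneg _ _ hhalf, sqrt_sq,
          sqrt_sq, mul_mul_mul_comm, sqrt_mul_sqrt]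
    _ ≤ (∑' x, ∑' y, k (y⁻¹ * x) * w x ^ 2) ^ (1 / 2 : ℝ) *
          (∑' x, ∑' y, k (y⁻¹ * x) * w y ^ 2) ^ (1 / 2 : ℝ) :=
        tsum_tsum_rpow_mul_rpow_le _ _ hhalf hhalf (by norm_num)
    _ = (∑' g, k g) * ∑' x, w x ^ 2 := by
        rw [tsum_tsum_conv_mul_sq_left, tsum_tsum_conv_mul_sq_right, sqrt_mul_sqrt]

/-- Hölder's inequality interpolates between Young's inequality at `p = 1` and the trivial bound for
a bounded kernel at `p = 2`. -/
lemma tsum_tsum_conv_mul_rpow_le (k w : G → ℝ≥0∞) {p : ℝ} (hp1 : 1 ≤ p) (hp2 : p < 2) :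
    ∑' x, ∑' y, k (y⁻¹ * x) * (w x * w y) ^ p ≤
      (∑' g, k g ^ (2 - p)⁻¹) ^ (2 - p) * (∑' x, w x ^ 2) ^ p := by
  set T := ∑' x, w x ^ 2
  have hp1' : 0 ≤ p - 1 := by linarith
  have hp2' : 0 < 2 - p := by linarith
  have rpow_split (z : ℝ≥0∞) : (z ^ 2) ^ (p - 1) * z ^ (2 - p) = z ^ p := by
    rw [← ENNReal.rpow_natCast, ← ENNReal.rpow_mul,
      ← ENNReal.rpow_add_of_nonneg _ _ (by positivity) hp2'.le]
    congr 1
    push_cast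
    ring
  calc ∑' x, ∑' y, k (y⁻¹ * x) * (w x * w y) ^ p
      = ∑' x, ∑' y, (w x ^ 2 * w y ^ 2) ^ (p - 1) *
          (k (y⁻¹ * x) ^ (2 - p)⁻¹ * (w x * w y)) ^ (2 - p) := by
        refine tsum_congr fun x => tsum_congr fun y => ?_
        rw [ENNReal.mul_rpow_of_nonneg _ _ hp2'.le, ENNReal.rpow_inv_rpow hp2'.ne', ← mul_pow,
          mul_left_comm, rpow_split]
    _ ≤ (∑' x, ∑' y, w x ^ 2 * w y ^ 2) ^ (p - 1) *
          (∑' x, ∑' y, k (y⁻¹ * x) ^ (2 - p)⁻¹ * (w x * w y)) ^ (2 - p) :=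
        tsum_tsum_rpow_mul_rpow_le _ _ hp1' hp2'.le (by ring)
    _ ≤ (T ^ 2) ^ (p - 1) * ((∑' g, k g ^ (2 - p)⁻¹) * T) ^ (2 - p) := by
        rw [tsum_tsum_mul, ← sq]
        gcongr
        exact tsum_tsum_conv_mul_le (fun g => k g ^ (2 - p)⁻¹) w
    _ = (∑' g, k g ^ (2 - p)⁻¹) ^ (2 - p) * T ^ p := by
        rw [ENNReal.mul_rpow_of_nonneg _ _ hp2'.le, mul_left_comm, rpow_split]

end Young

section NonlocalTerm

/-- The absolute double sum `Σ_{x ≠ y} |R(x, y)| |w(x)|^p |w(y)|^p`, valued in `[0, ∞]` so that it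
makes sense before any summability is known. -/
def doubleSum [DecidableEq G] (R : G → G → ℝ) (p : ℝ) (w : G → ℝ) : ℝ≥0∞ :=
  ∑' x, ∑' y, if y = x then 0 else ‖R x y‖ₑ * (‖w x‖ₑ * ‖w y‖ₑ) ^ p

/-- The discrete Hardy–Littlewood–Sobolev inequality with constant `M`, in the diagonal form
`Σ_{x ≠ y} |R(x, y)| |w(x)|^p |w(y)|^p ≤ M ‖w‖₂^{2p}` used to control the nonlocal term. -/
def HLSBound [DecidableEq G] (R : G → G → ℝ) (p M : ℝ) : Prop :=
  ∀ w : G → ℝ, doubleSum R p w ≤ ENNReal.ofReal M * (∑' x, ‖w x‖ₑ ^ 2) ^ p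

lemma HLSBound.of_ne_top [DecidableEq G] {R : G → G → ℝ} {p : ℝ} {B : ℝ≥0∞} (hB : B ≠ ⊤)
    (h : ∀ w : G → ℝ, doubleSum R p w ≤ B * (∑' x, ‖w x‖ₑ ^ 2) ^ p) :
    HLSBound R p (B.toReal + 1) := by
  refine fun w => (h w).trans ?_
  gcongr
  exact (ENNReal.le_ofReal_iff_toReal_le hB (by positivity)).2 (by linarith)

lemma doubleSum_le_tsum_conv [Group G] [DecidableEq G] {R : G → G → ℝ} {k : G → ℝ≥0∞}
    (hk : ∀ x y, x ≠ y → ‖R x y‖ₑ ≤ k (y⁻¹ * x)) (p : ℝ) (w : G → ℝ) :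
    doubleSum R p w ≤ ∑' x, ∑' y, k (y⁻¹ * x) * (‖w x‖ₑ * ‖w y‖ₑ) ^ p := by
  refine ENNReal.tsum_le_tsum fun x => ENNReal.tsum_le_tsum fun y => ?_
  split_ifs with hyx
  · exact zero_le
  · gcongr
    exact hk x y (Ne.symm hyx)

lemma enorm_le_of_abs_le_wordDist [Group G] {S : Finset G} {R : G → G → ℝ} {K γ : ℝ}
    (hR : ∀ x y, x ≠ y → |R x y| ≤ K * (wordDist S x y : ℝ) ^ γ) {x y : G} (hxy : x ≠ y) :
    ‖R x y‖ₑ ≤ ENNReal.ofReal K * ENNReal.ofReal ((wordDist S (y⁻¹ * x) 1 : ℝ) ^ γ) := by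
  rw [← ENNReal.ofReal_mul' (by positivity), ← wordDist_eq_wordDist_one, Real.enorm_eq_ofReal_abs]
  exact ENNReal.ofReal_le_ofReal (hR x y hxy)

lemma doubleSum_le_of_two_le [Group G] [DecidableEq G] {S : Finset G} {R : G → G → ℝ} {K γ p : ℝ}
    (hR : ∀ x y, x ≠ y → |R x y| ≤ K * (wordDist S x y : ℝ) ^ γ) (hγ : γ ≤ 0) (hp : 2 ≤ p)
    (w : G → ℝ) : doubleSum R p w ≤ ENNReal.ofReal K * (∑' x, ‖w x‖ₑ ^ 2) ^ p := by
  have natCast_rpow_le_one (n : ℕ) : (n : ℝ) ^ γ ≤ 1 := by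
    rcases Nat.eq_zero_or_pos n with rfl | hn
    · exact Nat.cast_zero (R := ℝ) ▸ Real.zero_rpow_le_one γ
    · exact Real.rpow_le_one_of_one_le_of_nonpos (mod_cast hn) hγ
  have hk (x y : G) (hxy : x ≠ y) : ‖R x y‖ₑ ≤ ENNReal.ofReal K :=
    (enorm_le_of_abs_le_wordDist hR hxy).trans <|
      mul_le_of_le_one_right' (ENNReal.ofReal_le_one.2 (natCast_rpow_le_one _))
  calc doubleSum R p w
      ≤ ∑' x, ∑' y, ENNReal.ofReal K * (‖w x‖ₑ * ‖w y‖ₑ) ^ p :=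
        doubleSum_le_tsum_conv (k := fun _ => ENNReal.ofReal K) hk p w
    _ = ENNReal.ofReal K * (∑' x, ‖w x‖ₑ ^ p) ^ 2 := by
        simp_rw [ENNReal.mul_rpow_of_nonneg _ _ (zero_le_two.trans hp), ENNReal.tsum_mul_left,
          ENNReal.tsum_mul_right, sq]
    _ ≤ ENNReal.ofReal K * ((∑' x, ‖w x‖ₑ ^ 2) ^ (p / 2)) ^ 2 := by
        gcongr
        exact tsum_rpow_le_rpow_tsum_sq _ hp
    _ = ENNReal.ofReal K * (∑' x, ‖w x‖ₑ ^ 2) ^ p := by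
        rw [← ENNReal.rpow_natCast _ 2, ← ENNReal.rpow_mul, Nat.cast_ofNat,
          div_mul_cancel₀ _ two_ne_zero]

lemma doubleSum_le_of_lt_two [Group G] [DecidableEq G] {S : Finset G}
    (hS : Submonoid.closure (S : Set G) = ⊤) {N : ℕ} {C : ℝ}
    (hgrowth : ∀ r : ℝ, 1 ≤ r → ((ball S (1 : G) r).ncard : ℝ) ≤ C * r ^ N)
    {R : G → G → ℝ} {K γ p β : ℝ}
    (hR : ∀ x y, x ≠ y → |R x y| ≤ K * (wordDist S x y : ℝ) ^ γ)
    (hp1 : 1 ≤ p) (hp2 : p < 2) (hβ : 0 < β) (hγ : γ * (2 - p)⁻¹ = -β) (w : G → ℝ) :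
    doubleSum R p w ≤ (ENNReal.ofReal K ^ (2 - p)⁻¹ *
      (ENNReal.ofReal (C * 2 ^ N) * (1 - ENNReal.ofReal ((2 : ℝ) ^ (N - β)))⁻¹)) ^ (2 - p) *
        (∑' x, ‖w x‖ₑ ^ 2) ^ p := by
  have hq : 0 ≤ (2 - p)⁻¹ := inv_nonneg.2 (by linarith)
  set k : G → ℝ≥0∞ := fun g => ENNReal.ofReal K * ENNReal.ofReal ((wordDist S g 1 : ℝ) ^ γ)
  have tsum_kernel_le : ∑' g, k g ^ (2 - p)⁻¹ ≤ ENNReal.ofReal K ^ (2 - p)⁻¹ *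
      (ENNReal.ofReal (C * 2 ^ N) * (1 - ENNReal.ofReal ((2 : ℝ) ^ (N - β)))⁻¹) := by
    have kernel_rpow (g : G) : k g ^ (2 - p)⁻¹ =
        ENNReal.ofReal K ^ (2 - p)⁻¹ * ENNReal.ofReal ((wordDist S g 1 : ℝ) ^ (-β)) := by
      rw [ENNReal.mul_rpow_of_nonneg _ _ hq,
        ENNReal.ofReal_rpow_of_nonneg (x := (wordDist S g 1 : ℝ) ^ γ) (by positivity) hq,
        ← Real.rpow_mul (Nat.cast_nonneg _), hγ]
    simp_rw [kernel_rpow, ENNReal.tsum_mul_left]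
    gcongr
    exact tsum_ofReal_wordDist_rpow_neg_le hS hgrowth hβ
  calc doubleSum R p w
      ≤ ∑' x, ∑' y, k (y⁻¹ * x) * (‖w x‖ₑ * ‖w y‖ₑ) ^ p :=
        doubleSum_le_tsum_conv (fun x y hxy => enorm_le_of_abs_le_wordDist hR hxy) p w
    _ ≤ (∑' g, k g ^ (2 - p)⁻¹) ^ (2 - p) * (∑' x, ‖w x‖ₑ ^ 2) ^ p :=
        tsum_tsum_conv_mul_rpow_le k _ hp1 hp2
    _ ≤ _ := by gcongr

theorem exists_HLSBound.{u} (N : ℕ) {α p : ℝ} (C K : ℝ) (hα : α ≤ N) (hp1 : 1 ≤ p)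
    (hp : N + α < N * p) :
    ∃ M : ℝ, 0 < M ∧ ∀ {G : Type u} [Group G] [DecidableEq G] (S : Finset G) (R : G → G → ℝ),
      Submonoid.closure (S : Set G) = ⊤ →
      (∀ r : ℝ, 1 ≤ r → ((ball S (1 : G) r).ncard : ℝ) ≤ C * r ^ N) →
      (∀ x y, x ≠ y → |R x y| ≤ K * (wordDist S x y : ℝ) ^ (α - N)) → HLSBound R p M := by
  rcases le_or_gt 2 p with hp2 | hp2
  · exact ⟨_, by positivity, fun S R _ _ hR => HLSBound.of_ne_top ENNReal.ofReal_ne_top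
      (doubleSum_le_of_two_le hR (by linarith) hp2)⟩
  · set β : ℝ := (N - α) / (2 - p)
    have hNβ : N < β := by
      rw [lt_div_iff₀ (by linarith)]
      linarith
    have hq : 0 ≤ (2 - p)⁻¹ := inv_nonneg.2 (by linarith)
    have ratio_lt_one : ENNReal.ofReal ((2 : ℝ) ^ (N - β)) < 1 :=
      ENNReal.ofReal_lt_one.2 (Real.rpow_lt_one_of_one_lt_of_neg one_lt_two (by linarith))
    have const_ne_top : (ENNReal.ofReal K ^ (2 - p)⁻¹ * (ENNReal.ofReal (C * 2 ^ N) *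
        (1 - ENNReal.ofReal ((2 : ℝ) ^ (N - β)))⁻¹)) ^ (2 - p) ≠ ⊤ :=
      ENNReal.rpow_ne_top_of_nonneg (by linarith) <|
        ENNReal.mul_ne_top (ENNReal.rpow_ne_top_of_nonneg hq ENNReal.ofReal_ne_top) <|
          ENNReal.mul_ne_top ENNReal.ofReal_ne_top
            (ENNReal.inv_ne_top.2 (tsub_pos_of_lt ratio_lt_one).ne')
    have hexp : (α - N) * (2 - p)⁻¹ = -β := by rw [← div_eq_mul_inv, ← neg_div, neg_sub]
    exact ⟨_, by positivity, fun S R hS hgrowth hR => HLSBound.of_ne_top const_ne_top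
      (doubleSum_le_of_lt_two hS hgrowth hR hp1 hp2 (N.cast_nonneg.trans_lt hNβ) hexp)⟩

lemma abs_rpow_sub_two_mul_mul_le {p : ℝ} (hp : 1 ≤ p) (s t : ℝ) :
    |(|s| ^ (p - 2) * s * t)| ≤ (|s| ⊔ |t|) ^ p := by
  rcases eq_or_ne s 0 with rfl | hs
  · simp only [mul_zero, zero_mul, abs_zero]
    positivity
  have hs' : 0 < |s| := abs_pos.2 hs
  calc |(|s| ^ (p - 2) * s * t)|
      = |s| ^ (p - 1) * |t| := by
        rw [abs_mul, abs_mul, abs_of_nonneg (by positivity : 0 ≤ |s| ^ (p - 2)),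
          ← Real.rpow_add_one hs'.ne', show p - 2 + 1 = p - 1 by ring]
    _ ≤ (|s| ⊔ |t|) ^ (p - 1) * (|s| ⊔ |t|) := by
        exact mul_le_mul (Real.rpow_le_rpow hs'.le le_sup_left (by linarith)) le_sup_right
          (abs_nonneg _) (by positivity)
    _ = (|s| ⊔ |t|) ^ p := by
        rw [← Real.rpow_add_one (hs'.trans_le le_sup_left).ne', sub_add_cancel]

variable [DecidableEq G] {R : G → G → ℝ} {p : ℝ}

lemma enorm_conv_le (f : G → ℝ) (x : G) :
    ‖conv R f x‖ₑ ≤ ∑' y, if y = x then 0 else ‖R x y‖ₑ * ‖f y‖ₑ := by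
  refine enorm_tsum_le_tsum_enorm.trans_eq (tsum_congr fun y => ?_)
  split_ifs with hyx
  · exact enorm_zero
  · exact enorm_mul _ _

lemma enorm_Kterm_le (hp : 1 ≤ p) (u v : G → ℝ) :
    ‖Kterm R p u v‖ₑ ≤ doubleSum R p (|u| ⊔ |v|) := by
  set w := |u| ⊔ |v|
  have hp0 : 0 ≤ p := zero_le_one.trans hp
  have w_nonneg (x : G) : 0 ≤ w x := le_sup_of_le_left (abs_nonneg (u x))
  have enorm_rpow_w (x : G) : ‖w x ^ p‖ₑ = ‖w x‖ₑ ^ p := Real.enorm_rpow_of_nonneg (w_nonneg x) hp0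
  have enorm_factor_le (x : G) : ‖|u x| ^ (p - 2) * u x * v x‖ₑ ≤ ‖w x‖ₑ ^ p := by
    rw [← enorm_rpow_w]
    exact enorm_le_iff_norm_le.2 ((abs_rpow_sub_two_mul_mul_le hp _ _).trans (le_abs_self _))
  have enorm_density_le (y : G) : ‖|u y| ^ p‖ₑ ≤ ‖w y‖ₑ ^ p := by
    rw [← enorm_rpow_w]
    refine enorm_le_iff_norm_le.2 (norm_le_norm_of_abs_le_abs ?_)
    rw [abs_of_nonneg (by positivity), abs_of_nonneg (Real.rpow_nonneg (w_nonneg y) p)]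
    exact Real.rpow_le_rpow (abs_nonneg _) le_sup_left hp0
  refine enorm_tsum_le_tsum_enorm.trans (ENNReal.tsum_le_tsum fun x => ?_)
  calc ‖conv R (fun y => |u y| ^ p) x * (|u x| ^ (p - 2) * u x * v x)‖ₑ
      ≤ (∑' y, if y = x then 0 else ‖R x y‖ₑ * ‖w y‖ₑ ^ p) * ‖w x‖ₑ ^ p := by
        rw [enorm_mul]
        gcongr
        · refine (enorm_conv_le _ x).trans (ENNReal.tsum_le_tsum fun y => ?_)
          split_ifs
          · exact le_rfl
          · gcongr
            exact enorm_density_le y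
        · exact enorm_factor_le x
    _ = ∑' y, if y = x then 0 else ‖R x y‖ₑ * (‖w x‖ₑ * ‖w y‖ₑ) ^ p := by
        simp_rw [← ENNReal.tsum_mul_right, ite_mul, zero_mul, ENNReal.mul_rpow_of_nonneg _ _ hp0,
          mul_assoc, mul_comm (‖w x‖ₑ ^ p)]

lemma HLSBound.abs_Kterm_le {M : ℝ} (hR : HLSBound R p M) (hM : 0 ≤ M) (hp : 1 ≤ p)
    {u v f : G → ℝ} (hf : Summable f) (hu : ∀ x, u x ^ 2 ≤ f x) (hv : ∀ x, v x ^ 2 ≤ f x) :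
    |Kterm R p u v| ≤ M * (∑' x, f x) ^ p := by
  have f_nonneg (x : G) : 0 ≤ f x := (sq_nonneg _).trans (hu x)
  have sq_sup_le (x : G) : ‖(|u| ⊔ |v|) x‖ₑ ^ 2 ≤ ENNReal.ofReal (f x) := by
    rw [Real.enorm_eq_ofReal_abs, ← ENNReal.ofReal_pow (abs_nonneg _), sq_abs]
    refine ENNReal.ofReal_le_ofReal ?_
    rcases max_choice |u x| |v x| with h | h <;>
      simp only [Pi.sup_apply, Pi.abs_apply, h, sq_abs, hu x, hv x]
  have hf0 : 0 ≤ ∑' x, f x := tsum_nonneg f_nonneg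
  have hp0 : 0 ≤ p := zero_le_one.trans hp
  refine (ENNReal.ofReal_le_ofReal_iff (by positivity)).1 ?_
  calc ENNReal.ofReal |Kterm R p u v|
      ≤ doubleSum R p (|u| ⊔ |v|) := Real.enorm_eq_ofReal_abs _ ▸ enorm_Kterm_le hp u v
    _ ≤ ENNReal.ofReal M * (∑' x, ‖(|u| ⊔ |v|) x‖ₑ ^ 2) ^ p := hR _
    _ ≤ ENNReal.ofReal M * (∑' x, ENNReal.ofReal (f x)) ^ p := by
        gcongr with x
        exact sq_sup_le x
    _ = ENNReal.ofReal (M * (∑' x, f x) ^ p) := by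
        rw [← ENNReal.ofReal_tsum_of_nonneg f_nonneg hf,
          ENNReal.ofReal_rpow_of_nonneg hf0 hp0, ENNReal.ofReal_mul hM]

lemma Kterm_self (hp : p ≠ 0) (u : G → ℝ) : Kterm R p u u = Dterm R p u := by
  refine tsum_congr fun x => congrArg _ ?_
  rcases eq_or_ne (u x) 0 with hx | hx
  · simp only [hx, mul_zero, abs_zero, Real.zero_rpow hp]
  · rw [mul_assoc, ← sq, ← sq_abs, ← Real.rpow_natCast, ← Real.rpow_add (abs_pos.2 hx),
      Nat.cast_ofNat, sub_add_cancel]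

lemma Kterm_smul_right (u v : G → ℝ) (t : ℝ) : Kterm R p u (t • v) = t * Kterm R p u v := by
  simp only [Kterm, ← tsum_mul_left, Pi.smul_apply, smul_eq_mul]
  exact tsum_congr fun x => by ring

end NonlocalTerm

section EnergySpace

variable [Group G] {S : Finset G} {a : G → ℝ} {lam : ℝ} {u v : G → ℝ}

/-- The density of the inner product `⟨u, v⟩_{E_λ}`, that is, the symmetric bilinear form whose
quadratic form is `eDensity`. -/
def eForm (S : Finset G) (a : G → ℝ) (lam : ℝ) (u v : G → ℝ) (x : G) : ℝ :=
  lap S u x * lap S v x + grad S u v x + (1 + lam * a x) * (u x * v x)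

lemma lap_add_smul (u v : G → ℝ) (t : ℝ) (x : G) :
    lap S (u + t • v) x = lap S u x + t * lap S v x := by
  simp only [lap, Finset.mul_sum, ← Finset.sum_add_distrib, Pi.add_apply, Pi.smul_apply,
    smul_eq_mul]
  exact Finset.sum_congr rfl fun s _ => by ring

lemma grad_self_add_smul (u v : G → ℝ) (t : ℝ) (x : G) :
    grad S (u + t • v) (u + t • v) x =
      grad S u u x + 2 * t * grad S u v x + t ^ 2 * grad S v v x := by
  simp only [grad, Finset.mul_sum, ← Finset.sum_add_distrib, Pi.add_apply, Pi.smul_apply,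
    smul_eq_mul]
  exact Finset.sum_congr rfl fun s _ => by ring

lemma eDensity_add_smul (u v : G → ℝ) (t : ℝ) (x : G) :
    eDensity S a lam (u + t • v) x =
      eDensity S a lam u x + 2 * t * eForm S a lam u v x + t ^ 2 * eDensity S a lam v x := by
  simp only [eDensity, eForm, lap_add_smul, grad_self_add_smul, Pi.add_apply, Pi.smul_apply,
    smul_eq_mul]
  ring

lemma eForm_self (u : G → ℝ) (x : G) : eForm S a lam u u x = eDensity S a lam u x := by
  simp only [eForm, eDensity, sq]

lemma eForm_comm (u v : G → ℝ) (x : G) : eForm S a lam u v x = eForm S a lam v u x := by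
  simp only [eForm, grad, mul_comm]

lemma eForm_smul_right (u v : G → ℝ) (t : ℝ) (x : G) :
    eForm S a lam u (t • v) x = t * eForm S a lam u v x := by
  have lap_smul : lap S (t • v) x = t * lap S v x := by
    simp only [lap, Finset.mul_sum, Pi.smul_apply, smul_eq_mul, mul_sub]
  have grad_smul_right : grad S u (t • v) x = t * grad S u v x := by
    simp only [grad, Finset.mul_sum, Pi.smul_apply, smul_eq_mul]
    exact Finset.sum_congr rfl fun s _ => by ring
  simp only [eForm, lap_smul, grad_smul_right, Pi.smul_apply, smul_eq_mul]
  ring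

lemma eDensity_smul (u : G → ℝ) (t : ℝ) (x : G) :
    eDensity S a lam (t • u) x = t ^ 2 * eDensity S a lam u x := by
  rw [← eForm_self, eForm_smul_right, eForm_comm, eForm_smul_right, eForm_self, sq, mul_assoc]

lemma sq_le_eDensity (hla : ∀ x, 0 ≤ lam * a x) (u : G → ℝ) (x : G) :
    u x ^ 2 ≤ eDensity S a lam u x := by
  have grad_nonneg : 0 ≤ grad S u u x :=
    mul_nonneg (by norm_num) (Finset.sum_nonneg fun s _ => mul_self_nonneg _)
  rw [eDensity, one_add_mul]
  linarith [sq_nonneg (lap S u x), mul_nonneg (hla x) (sq_nonneg (u x))]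

lemma eDensity_nonneg (hla : ∀ x, 0 ≤ lam * a x) (u : G → ℝ) (x : G) :
    0 ≤ eDensity S a lam u x :=
  (sq_nonneg _).trans (sq_le_eDensity hla u x)

lemma two_mul_abs_eForm_le (hla : ∀ x, 0 ≤ lam * a x) (u v : G → ℝ) (x : G) :
    2 * |eForm S a lam u v x| ≤ eDensity S a lam u x + eDensity S a lam v x := by
  have hadd := eDensity_add_smul (S := S) (a := a) (lam := lam) u v 1 x
  have hsub := eDensity_add_smul (S := S) (a := a) (lam := lam) u v (-1) x
  rcases abs_cases (eForm S a lam u v x) with ⟨habs, -⟩ | ⟨habs, -⟩ <;> rw [habs]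
  · linarith [eDensity_nonneg (S := S) hla (u + (-1 : ℝ) • v) x]
  · linarith [eDensity_nonneg (S := S) hla (u + (1 : ℝ) • v) x]

lemma two_mul_abs_innerE_le (hla : ∀ x, 0 ≤ lam * a x) (hu : MemE S a lam u)
    (hv : MemE S a lam v) :
    2 * |innerE S a lam u v| ≤ normEsq S a lam u + normEsq S a lam v := by
  have hsum := (hu.hasSum.add hv.hasSum).div_const 2
  exact (le_div_iff₀' two_pos).1 <| tsum_of_norm_bounded (f := eForm S a lam u v) hsum fun x =>
    (le_div_iff₀' two_pos).2 (two_mul_abs_eForm_le hla u v x)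

lemma innerE_self (u : G → ℝ) : innerE S a lam u u = normEsq S a lam u :=
  tsum_congr (eForm_self u)

lemma innerE_smul_right (u v : G → ℝ) (t : ℝ) :
    innerE S a lam u (t • v) = t * innerE S a lam u v :=
  (tsum_congr (eForm_smul_right u v t)).trans tsum_mul_left

lemma MemE.smul (hu : MemE S a lam u) (t : ℝ) : MemE S a lam (t • u) :=
  (hu.mul_left (t ^ 2)).congr fun x => (eDensity_smul u t x).symm

lemma normEsq_smul (u : G → ℝ) (t : ℝ) : normEsq S a lam (t • u) = t ^ 2 * normEsq S a lam u :=
  (tsum_congr (eDensity_smul u t)).trans tsum_mul_left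

lemma normEsq_nonneg (hla : ∀ x, 0 ≤ lam * a x) (u : G → ℝ) : 0 ≤ normEsq S a lam u :=
  tsum_nonneg (eDensity_nonneg hla u)

lemma normE_sq (hla : ∀ x, 0 ≤ lam * a x) (u : G → ℝ) :
    normE S a lam u ^ 2 = normEsq S a lam u :=
  Real.sq_sqrt (normEsq_nonneg hla u)

lemma normE_nonneg (u : G → ℝ) : 0 ≤ normE S a lam u :=
  Real.sqrt_nonneg _

lemma eq_zero_of_normE_eq_zero (hla : ∀ x, 0 ≤ lam * a x) (hu : MemE S a lam u)
    (h : normE S a lam u = 0) : u = 0 := by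
  have normEsq_zero : normEsq S a lam u = 0 := by rw [← normE_sq hla, h, zero_pow two_ne_zero]
  have density_zero : eDensity S a lam u = 0 :=
    (hasSum_zero_iff_of_nonneg (eDensity_nonneg hla u)).1 (hu.hasSum_iff.2 normEsq_zero)
  funext x
  exact sq_nonpos_iff _ |>.1 ((sq_le_eDensity hla u x).trans_eq (congrFun density_zero x))

end EnergySpace

section Derivative

variable [Group G] [DecidableEq G] {S : Finset G} {a : G → ℝ} {lam : ℝ} {R : G → G → ℝ}
  {p M : ℝ} {u v : G → ℝ}

lemma Jd_smul_right (u v : G → ℝ) (t : ℝ) :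
    Jd S a lam R p u (t • v) = t * Jd S a lam R p u v := by
  simp only [Jd, innerE_smul_right, Kterm_smul_right, mul_sub]

lemma Jd_self (hp : p ≠ 0) (u : G → ℝ) :
    Jd S a lam R p u u = normEsq S a lam u - Dterm R p u := by
  rw [Jd, innerE_self, Kterm_self hp]

lemma sub_one_mul_normEsq (hp : p ≠ 0) (u : G → ℝ) :
    (p - 1) * normEsq S a lam u = 2 * p * Jfun S a lam R p u - Jd S a lam R p u u := by
  rw [Jd_self hp, Jfun]
  field_simp
  ring

lemma HLSBound.abs_Dterm_le (hR : HLSBound R p M) (hM : 0 ≤ M) (hp : 1 ≤ p)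
    (hla : ∀ x, 0 ≤ lam * a x) (hu : MemE S a lam u) :
    |Dterm R p u| ≤ M * normEsq S a lam u ^ p := by
  rw [← Kterm_self (by linarith)]
  exact hR.abs_Kterm_le hM hp hu (sq_le_eDensity hla u) (sq_le_eDensity hla u)

lemma HLSBound.abs_Jd_le (hR : HLSBound R p M) (hM : 0 ≤ M) (hp : 1 ≤ p)
    (hla : ∀ x, 0 ≤ lam * a x) (hu : MemE S a lam u) (hv : MemE S a lam v) :
    |Jd S a lam R p u v| ≤ (normEsq S a lam u + normEsq S a lam v) +
      M * (normEsq S a lam u + normEsq S a lam v) ^ p := by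
  have hinner : |innerE S a lam u v| ≤ normEsq S a lam u + normEsq S a lam v := by
    linarith [two_mul_abs_innerE_le hla hu hv, abs_nonneg (innerE S a lam u v)]
  have hK := hR.abs_Kterm_le hM hp (hu.add hv)
    (fun x => le_add_of_le_of_nonneg (sq_le_eDensity hla u x) (eDensity_nonneg hla v x))
    (fun x => le_add_of_nonneg_of_le (eDensity_nonneg hla u x) (sq_le_eDensity hla v x))
  rw [hu.tsum_add hv] at hK
  exact (abs_sub _ _).trans (add_le_add hinner hK)

lemma HLSBound.abs_Jd_le_dualNorm (hR : HLSBound R p M) (hM : 0 ≤ M) (hp : 1 ≤ p)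
    (hla : ∀ x, 0 ≤ lam * a x) (hu : MemE S a lam u) (hv : MemE S a lam v)
    (hv1 : normEsq S a lam v ≤ 1) : |Jd S a lam R p u v| ≤ dualNorm S a lam R p u := by
  refine le_csSup ⟨(normEsq S a lam u + 1) + M * (normEsq S a lam u + 1) ^ p, ?_⟩ ⟨v, hv, hv1, rfl⟩
  rintro _ ⟨w, hw, hw1, rfl⟩
  have hnonneg : 0 ≤ normEsq S a lam u + normEsq S a lam w :=
    add_nonneg (normEsq_nonneg hla u) (normEsq_nonneg hla w)
  refine (hR.abs_Jd_le hM hp hla hu hw).trans ?_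
  gcongr

lemma HLSBound.abs_Jd_le_dualNorm_mul_normE (hR : HLSBound R p M) (hM : 0 ≤ M) (hp : 1 ≤ p)
    (hla : ∀ x, 0 ≤ lam * a x) (hu : MemE S a lam u) (hv : MemE S a lam v) :
    |Jd S a lam R p u v| ≤ dualNorm S a lam R p u * normE S a lam v := by
  rcases (normE_nonneg (S := S) (a := a) (lam := lam) v).eq_or_lt with hv0 | hv0
  · have Jd_zero : Jd S a lam R p u v = 0 := by
      rw [eq_zero_of_normE_eq_zero hla hv hv0.symm, ← zero_smul ℝ (0 : G → ℝ), Jd_smul_right,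
        zero_mul]
    rw [Jd_zero, ← hv0, mul_zero, abs_zero]
  · have normEsq_normalized : normEsq S a lam ((normE S a lam v)⁻¹ • v) = 1 := by
      rw [normEsq_smul, ← normE_sq hla v, ← mul_pow, inv_mul_cancel₀ hv0.ne', one_pow]
    have hle := hR.abs_Jd_le_dualNorm hM hp hla hu (hv.smul _) normEsq_normalized.le
    rwa [Jd_smul_right, abs_mul, abs_of_pos (inv_pos.2 hv0), inv_mul_le_iff₀' hv0] at hle

end Derivative

section PalaisSmale

lemma le_max_of_sq_le {r A B : ℝ} (hA : 0 ≤ A) (h : r ^ 2 ≤ A + B * r) : r ≤ max 1 (A + B) := by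
  rcases le_or_gt r 1 with hr | hr
  · exact le_max_of_le_left hr
  · refine le_max_of_le_right (le_of_mul_le_mul_right ?_ (one_pos.trans hr))
    linarith [mul_le_mul_of_nonneg_left hr.le hA]

lemma eq_zero_or_inv_rpow_le_of_le_mul_rpow {X M p : ℝ} (hX : 0 ≤ X) (hM : 0 < M) (hp : 1 < p)
    (h : X ≤ M * X ^ p) : X = 0 ∨ M⁻¹ ^ (p - 1)⁻¹ ≤ X := by
  refine hX.eq_or_lt.imp Eq.symm fun hX0 => ?_
  rw [Real.rpow_inv_le_iff_of_pos (inv_nonneg.2 hM.le) hX (by linarith), inv_le_iff_one_le_mul₀' hM,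
    Real.rpow_sub_one hX0.ne', ← mul_div_assoc, one_le_div hX0]
  exact h

variable [Group G] [DecidableEq G] {S : Finset G} {a : G → ℝ} {lam : ℝ} {R : G → G → ℝ}
  {p M c : ℝ} {U : ℕ → G → ℝ}

theorem PSseq.exists_normE_le (hU : PSseq S a lam R p c U) (hR : HLSBound R p M) (hM : 0 ≤ M)
    (hp : 1 < p) (hla : ∀ x, 0 ≤ lam * a x) : ∃ B : ℝ, ∀ n, normE S a lam (U n) ≤ B := by
  obtain ⟨hmem, hJ, hdual⟩ := hU
  obtain ⟨A, hA⟩ := hJ.abs.bddAbove_range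
  obtain ⟨B, hB⟩ := hdual.bddAbove_range
  have hA0 : 0 ≤ A := (abs_nonneg _).trans (hA ⟨0, rfl⟩)
  have hp' : 0 < p - 1 := sub_pos.2 hp
  refine ⟨_, fun n => le_max_of_sq_le (A := 2 * p * A / (p - 1)) (B := B / (p - 1))
    (by positivity) ?_⟩
  rw [div_mul_eq_mul_div, ← add_div, le_div_iff₀' hp', normE_sq hla,
    sub_one_mul_normEsq (R := R) (by linarith), sub_eq_add_neg]
  have hJd : -Jd S a lam R p (U n) (U n) ≤ B * normE S a lam (U n) :=
    calc -Jd S a lam R p (U n) (U n)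
        ≤ dualNorm S a lam R p (U n) * normE S a lam (U n) := (neg_le_abs _).trans <|
          hR.abs_Jd_le_dualNorm_mul_normE hM hp.le hla (hmem n) (hmem n)
      _ ≤ B * normE S a lam (U n) :=
        mul_le_mul_of_nonneg_right (hB ⟨n, rfl⟩) (normE_nonneg _)
  gcongr
  exact (le_abs_self _).trans (hA ⟨n, rfl⟩)

theorem PSseq.tendsto_Jd_self (hU : PSseq S a lam R p c U) (hR : HLSBound R p M) (hM : 0 ≤ M)
    (hp : 1 < p) (hla : ∀ x, 0 ≤ lam * a x) :
    Tendsto (fun n => Jd S a lam R p (U n) (U n)) atTop (nhds 0) := by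
  obtain ⟨B, hB⟩ := hU.exists_normE_le hR hM hp hla
  obtain ⟨hmem, -, hdual⟩ := hU
  refine squeeze_zero_norm (fun n => ?_) (by simpa only [zero_mul] using hdual.mul_const B)
  calc |Jd S a lam R p (U n) (U n)|
      ≤ dualNorm S a lam R p (U n) * normE S a lam (U n) :=
        hR.abs_Jd_le_dualNorm_mul_normE hM hp.le hla (hmem n) (hmem n)
    _ ≤ dualNorm S a lam R p (U n) * B := by
        refine mul_le_mul_of_nonneg_left (hB n) (Real.sSup_nonneg ?_)
        rintro _ ⟨v, -, -, rfl⟩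
        exact abs_nonneg _

theorem PSseq.tendsto_normEsq (hU : PSseq S a lam R p c U) (hR : HLSBound R p M) (hM : 0 ≤ M)
    (hp : 1 < p) (hla : ∀ x, 0 ≤ lam * a x) :
    Tendsto (fun n => normEsq S a lam (U n)) atTop (nhds (2 * p * c / (p - 1))) := by
  have hlim := ((hU.2.1.const_mul (2 * p)).sub (hU.tendsto_Jd_self hR hM hp hla)).div_const (p - 1)
  rw [sub_zero] at hlim
  refine hlim.congr fun n => ?_
  rw [← sub_one_mul_normEsq (by linarith), mul_div_cancel_left₀ _ (by linarith)]

theorem PSseq.eq_zero_or_le (hU : PSseq S a lam R p c U) (hR : HLSBound R p M) (hM : 0 < M)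
    (hp : 1 < p) (hla : ∀ x, 0 ≤ lam * a x) :
    c = 0 ∨ (p - 1) / (2 * p) * M⁻¹ ^ (p - 1)⁻¹ ≤ c := by
  set X := 2 * p * c / (p - 1) with hX
  have hp' : 0 < p - 1 := sub_pos.2 hp
  have hc : c = (p - 1) / (2 * p) * X := by
    rw [hX]
    field_simp
  have hlim : Tendsto (fun n => normEsq S a lam (U n)) atTop (nhds X) :=
    hU.tendsto_normEsq hR hM.le hp hla
  have hX0 : 0 ≤ X := ge_of_tendsto' hlim fun n => normEsq_nonneg hla (U n)
  have normEsq_le (n : ℕ) : normEsq S a lam (U n) ≤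
      Jd S a lam R p (U n) (U n) + M * normEsq S a lam (U n) ^ p := by
    rw [Jd_self (by linarith)]
    linarith [le_of_abs_le (hR.abs_Dterm_le hM.le hp.le hla (hU.1 n))]
  have X_le : X ≤ 0 + M * X ^ p := le_of_tendsto_of_tendsto' hlim
    ((hU.tendsto_Jd_self hR hM.le hp hla).add
      ((hlim.rpow_const (Or.inr (by linarith))).const_mul M)) normEsq_le
  rw [zero_add] at X_le
  rw [hc]
  refine (eq_zero_or_inv_rpow_le_of_le_mul_rpow hX0 hM hp X_le).imp (fun h => ?_) fun h => ?_
  · rw [h, mul_zero]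
  · gcongr

end PalaisSmale

theorem PS_bounded_and_norm_limit_general.{u} (N : ℕ) {α p : ℝ} (C K : ℝ) (hα : α ≤ N)
    (hp1 : 1 < p) (hp : N + α < N * p) :
    ∃ c₀ : ℝ, 0 < c₀ ∧ ∀ {G : Type u} [Group G] [DecidableEq G] (S : Finset G) (R : G → G → ℝ),
      Submonoid.closure (S : Set G) = ⊤ →
      (∀ r : ℝ, 1 ≤ r → ((ball S (1 : G) r).ncard : ℝ) ≤ C * r ^ N) →
      (∀ x y, x ≠ y → |R x y| ≤ K * (wordDist S x y : ℝ) ^ (α - N)) →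
      ∀ (lam : ℝ) (a : G → ℝ), (∀ x, 0 ≤ lam * a x) → ∀ (c : ℝ) (U : ℕ → G → ℝ),
        PSseq S a lam R p c U →
          (∃ B : ℝ, ∀ n, normE S a lam (U n) ≤ B) ∧
          Tendsto (fun n => normEsq S a lam (U n)) atTop (nhds (2 * p * c / (p - 1))) ∧
          (c = 0 ∨ c₀ ≤ c) := by
  obtain ⟨M, hM, hHLS⟩ := exists_HLSBound.{u} N C K hα hp1.le hp
  refine ⟨(p - 1) / (2 * p) * M⁻¹ ^ (p - 1)⁻¹,
    mul_pos (div_pos (sub_pos.2 hp1) (by linarith)) (by positivity),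
    fun S R hS hgrowth hR lam a hla c U hU => ?_⟩
  have hRM : HLSBound R p M := hHLS S R hS hgrowth hR
  exact ⟨hU.exists_normE_le hRM hM.le hp1 hla, hU.tendsto_normEsq hRM hM.le hp1 hla,
    hU.eq_zero_or_le hRM hM hp1 hla⟩

theorem PS_bounded_and_norm_limit
    {G : Type*} [Group G] [Countable G] [DecidableEq G]
    (S : Finset G) (hSsymm : ∀ s ∈ S, s⁻¹ ∈ S)
    (hSgen : Subgroup.closure (S : Set G) = ⊤)
    (N : ℕ) (hN : 2 ≤ N) (hgrowth : PolyGrowth S N)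
    (α : ℝ) (hα0 : 0 < α) (hαN : α < (N : ℝ))
    (R : G → G → ℝ) (hR : RieszKernel S N α R)
    (p : ℝ) (hp : ((N : ℝ) + α) / (N : ℝ) < p) :
    (∀ lam : ℝ, 0 < lam → ∀ a : G → ℝ, (∀ x, 0 ≤ a x) → ∀ c : ℝ, ∀ U : ℕ → G → ℝ,
      PSseq S a lam R p c U →
        (∃ C : ℝ, ∀ n, normE S a lam (U n) ≤ C) ∧
        Tendsto (fun n => normEsq S a lam (U n)) atTop (nhds (2 * p * c / (p - 1)))) ∧
    ∃ c₀ : ℝ, 0 < c₀ ∧ ∀ lam : ℝ, 0 < lam → ∀ a : G → ℝ, (∀ x, 0 ≤ a x) →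
      ∀ c : ℝ, ∀ U : ℕ → G → ℝ, PSseq S a lam R p c U → c = 0 ∨ c₀ ≤ c := by
  obtain ⟨_, C₂, _, _, hball⟩ := hgrowth
  obtain ⟨hRpos, _, c₂, _, _, hRle⟩ := hR
  have hN0 : (0 : ℝ) < N := by positivity
  rw [div_lt_iff₀' hN0] at hp
  have hp1 : 1 < p := lt_of_mul_lt_mul_left (by linarith) hN0.le
  have hS : Submonoid.closure (S : Set G) = ⊤ := by
    rw [submonoidClosure_eq_subgroupClosure hSsymm, hSgen, Subgroup.top_toSubmonoid]
  have hRabs (x y : G) (hxy : x ≠ y) : |R x y| ≤ c₂ * (wordDist S x y : ℝ) ^ (α - N) :=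
    (abs_of_pos (hRpos x y)).trans_le (hRle x y hxy).2
  obtain ⟨c₀, hc₀, hPS⟩ := PS_bounded_and_norm_limit_general N C₂ c₂ hαN.le hp1 hp
  have hPS' (lam : ℝ) (hlam : 0 < lam) (a : G → ℝ) (ha : ∀ x, 0 ≤ a x) :=
    hPS S R hS (fun r hr => (hball r hr).2) hRabs lam a fun x => mul_nonneg hlam.le (ha x)
  refine ⟨fun lam hlam a ha c U hU => ?_, c₀, hc₀, fun lam hlam a ha c U hU => ?_⟩
  · exact (hPS' lam hlam a ha c U hU).imp_right And.left
  · exact (hPS' lam hlam a ha c U hU).2.2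

end Choquard
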